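/- Let H and K be groups, let H ∗ K be their free product, and let Σ : H ∗ K → H × K be the canonical homomorphism induced by the inclusions. Then the kernel of Σ is generated, as a subgroup of H ∗ K, by the elements inl(h) * inr(k) * inl(h)⁻¹ * inr(k)⁻¹ for h ∈ H and k ∈ K. (This is the paper's description of the formal commutator H ⋄ K in the category of groups as generated by the words (x, y, x⁻¹, y⁻¹).) -/

import Mathlib

open Monoid

/-!
The images of `H` and `K` generate `H ∗ K`, and each of them normalizes the commutator subgroup
`⁅H, K⁆`, so this subgroup is normal. In the quotient by it the two images commute, so the quotient
map factors through `Σ : H ∗ K → H × K`. Hence `ker Σ ≤ ⁅H, K⁆`. The reverse inclusion holds because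
the factors of `H × K` commute.
-/

section

open scoped commutatorElement

theorem normal_commutator_of_codisjoint {G : Type*} [Group G] {A B : Subgroup G}
    (hAB : Codisjoint A B) : ⁅A, B⁆.Normal :=
  Subgroup.normalizer_eq_top_iff.mp <| top_unique <| hAB.eq_top.ge.trans <|
    sup_le (Subgroup.normalizer_commutator_ge_left A B)
      (Subgroup.normalizer_commutator_ge_right A B)

theorem commutator_range_range {G H K : Type*} [Group G] [Group H] [Group K]
    (f : H →* G) (g : K →* G) :
    ⁅f.range, g.range⁆ = Subgroup.closure {x | ∃ h k, ⁅f h, g k⁆ = x} := by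
  simp only [Subgroup.commutator_def, MonoidHom.mem_range, exists_exists_eq_and]

theorem noncommCoprod_comp_toProd {M N P : Type*} [Monoid M] [Monoid N] [Monoid P]
    (f : M →* P) (g : N →* P) (comm : ∀ m n, Commute (f m) (g n)) :
    (f.noncommCoprod g comm).comp Coprod.toProd = Coprod.lift f g := by
  ext <;> simp

variable {H K : Type*} [Group H] [Group K]

theorem ker_toProd_le_ker {P : Type*} [Monoid P] (f : Coprod H K →* P)
    (comm : ∀ h k, Commute (f (Coprod.inl h)) (f (Coprod.inr k))) :
    (Coprod.toProd : Coprod H K →* H × K).ker ≤ f.ker := by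
  have factor : ((f.comp Coprod.inl).noncommCoprod (f.comp Coprod.inr) comm).comp
      Coprod.toProd = f := by
    rw [noncommCoprod_comp_toProd, ← Coprod.comp_lift, Coprod.lift_inl_inr, MonoidHom.comp_id]
  rw [← factor, ← MonoidHom.comap_ker]
  exact MonoidHom.ker_le_comap _ _

theorem ker_toProd_eq_commutator :
    (Coprod.toProd : Coprod H K →* H × K).ker =
      ⁅(Coprod.inl : H →* Coprod H K).range, (Coprod.inr : K →* Coprod H K).range⁆ := by
  apply le_antisymm
  · set N := ⁅(Coprod.inl : H →* Coprod H K).range, (Coprod.inr : K →* Coprod H K).range⁆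
    have : N.Normal := normal_commutator_of_codisjoint Coprod.codisjoint_range_inl_range_inr
    have commute_mod_N (h : H) (k : K) :
        Commute (QuotientGroup.mk' N (Coprod.inl h)) (QuotientGroup.mk' N (Coprod.inr k)) := by
      rw [← commutatorElement_eq_one_iff_commute, ← map_commutatorElement, ← MonoidHom.mem_ker,
        QuotientGroup.ker_mk']
      exact Subgroup.commutator_mem_commutator ⟨h, rfl⟩ ⟨k, rfl⟩
    exact (ker_toProd_le_ker _ commute_mod_N).trans_eq (QuotientGroup.ker_mk' N)
  · rw [Subgroup.commutator_le]
    rintro _ ⟨h, rfl⟩ _ ⟨k, rfl⟩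
    rw [MonoidHom.mem_ker, map_commutatorElement, commutatorElement_eq_one_iff_commute]
    exact MonoidHom.commute_inl_inr h k

end

/-- The formal commutator `H ⋄ K`: the kernel of the canonical homomorphism
`Σ : H ∗ K → H × K` is generated by the elements
`inl h * inr k * (inl h)⁻¹ * (inr k)⁻¹` for `h ∈ H`, `k ∈ K`. -/
theorem ker_sigma_eq_closure_commutator_words (H K : Type*) [Group H] [Group K] :
    (Coprod.lift (MonoidHom.inl H K) (MonoidHom.inr H K)).ker =
      Subgroup.closure
        {x : Coprod H K | ∃ h : H, ∃ k : K,
          x = Coprod.inl h * Coprod.inr k * (Coprod.inl h)⁻¹ * (Coprod.inr k)⁻¹} := by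
  calc
    (Coprod.lift (MonoidHom.inl H K) (MonoidHom.inr H K)).ker
    _ = (Coprod.toProd : Coprod H K →* H × K).ker := rfl
    _ = ⁅(Coprod.inl : H →* Coprod H K).range, (Coprod.inr : K →* Coprod H K).range⁆ :=
      ker_toProd_eq_commutator
    _ = _ := by simp only [commutator_range_range, commutatorElement_def, eq_comm]
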